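/- arXiv:1805.09552 — 4 statements merged into one kernel-verified Lean document; each statement's English description precedes it below -/
import Mathlib

section
/- Fix q ∈ (0,1), let μ be a finitely supported probability measure on I, and set λ = Σ_r μ(r)·dim(r)/dim_q(r). Then for every n ≥ 0 and all s,t ∈ I, the n-step transition kernel satisfies p_μ⁽ⁿ⁾(s,t) ≤ λⁿ·dim_q(t)/dim_q(s). In particular, if μ(e) < 1 then λ < 1 and the spectral radius lim sup_n p_μ⁽ⁿ⁾(s,s)^{1/n} is at most λ for every s ∈ I. (Lemma 4.1 together with the subsequent Remark of the paper.) -/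
open scoped ENNReal

namespace Paper

/-- Words in the two letters `α, β`: the free monoid on two generators, as `List Bool`.
The head of the list is the leftmost letter. -/
abbrev Word := List Bool

/-- Length of the longest common prefix of two lists. -/
def lcpLen : List Bool → List Bool → ℕ
  | a :: s, b :: t => if a = b then lcpLen s t + 1 else 0
  | _, _ => 0

/-- Length of the longest common suffix of two words. -/
def lcsLen (s t : Word) : ℕ := lcpLen s.reverse t.reverse

/-- The tree metric on `Word`: `d(s,t) = (|s| - k) + (|t| - k)`, `k` the length of the
longest common suffix. -/
def treeDist (s t : Word) : ℕ := (s.length - lcsLen s t) + (t.length - lcsLen s t)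

/-- The branch `Δ_x = {u x : u ∈ I}` of words having `x` as a suffix. -/
def Delta (x : Word) : Set Word := {s | x <:+ s}

/-- The geodesic segment `[s,t] = {v : d(s,v) + d(v,t) = d(s,t)}`. -/
def geodesic (s t : Word) : Set Word := {v | treeDist s v + treeDist v t = treeDist s t}

/-- Paths of `n` steps from `s` to `t` staying in `Ω`. -/
def pathSet {X : Type*} (Ω : Set X) (n : ℕ) (s t : X) : Set (Fin (n + 1) → X) :=
  {σ | σ 0 = s ∧ σ (Fin.last n) = t ∧ ∀ i, σ i ∈ Ω}

/-- The weight `∏ a(s_i, s_{i+1})` of a path, as an extended nonnegative real. -/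
noncomputable def weightE {X : Type*} (a : X → X → ℝ) (n : ℕ) (σ : Fin (n + 1) → X) : ℝ≥0∞ :=
  ∏ i : Fin n, ENNReal.ofReal (a (σ i.castSucc) (σ i.succ))

/-- The `n`-step kernel `a⁽ⁿ⁾(s,t)` of the kernel `a` on `Ω`, with values in `[0,∞]`. -/
noncomputable def nStepE {X : Type*} (Ω : Set X) (a : X → X → ℝ) (n : ℕ) (s t : X) : ℝ≥0∞ :=
  ∑' σ : pathSet Ω n s t, weightE a n σ.1

/-- The Green kernel `G_a(s,t) = Σ_n a⁽ⁿ⁾(s,t)` of `a` on `Ω`, with values in `[0,∞]`. -/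
noncomputable def greenE {X : Type*} (Ω : Set X) (a : X → X → ℝ) (s t : X) : ℝ≥0∞ :=
  ∑' n : ℕ, nStepE Ω a n s t

/-- The weight of a path, real version (for signed kernels). -/
noncomputable def weightR {X : Type*} (a : X → X → ℝ) (n : ℕ) (σ : Fin (n + 1) → X) : ℝ :=
  ∏ i : Fin n, a (σ i.castSucc) (σ i.succ)

/-- The `n`-step kernel of a signed kernel `a` on `Ω`. -/
noncomputable def nStepR {X : Type*} (Ω : Set X) (a : X → X → ℝ) (n : ℕ) (s t : X) : ℝ :=
  ∑' σ : pathSet Ω n s t, weightR a n σ.1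

/-- The Green kernel of a signed kernel `a` on `Ω`, as a real number. -/
noncomputable def greenR {X : Type*} (Ω : Set X) (a : X → X → ℝ) (s t : X) : ℝ :=
  ∑' n : ℕ, nStepR Ω a n s t

/-- The Green kernel of `|a|`: finiteness of this expresses absolute convergence of the
series defining the Green kernel of `a`. -/
noncomputable def greenAbs {X : Type*} (Ω : Set X) (a : X → X → ℝ) (s t : X) : ℝ≥0∞ :=
  greenE Ω (fun u v => |a u v|) s t

/-- (H1): finite range `S`. -/
def H1 (p : Word → Word → ℝ) (S : ℕ) : Prop := ∀ s t, S < treeDist s t → p s t = 0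

/-- (H2): nonzero transition probabilities are bounded below by `δ₀`. -/
def H2 (p : Word → Word → ℝ) (δ₀ : ℝ) : Prop := ∀ s t, 0 < p s t → δ₀ ≤ p s t

/-- (H3): uniform irreducibility. -/
def H3 (p : Word → Word → ℝ) (δ₀ : ℝ) (K : ℕ) : Prop :=
  ∀ s t, treeDist s t = 1 → ∃ k ≤ K, ∃ u : ℕ → Word, u 0 = s ∧ u k = t ∧
    ∀ i < k, ∀ x : Word, δ₀ ≤ p (u i ++ x) (u (i + 1) ++ x)

/-- The operator `(Pf)(s) = Σ_t p(s,t) f(t)` extends to a bounded operator of norm at most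
`lam` on `ℓ²(X, m)`, expressed via the associated bilinear form on finitely supported
functions. -/
def opNormBound {X : Type*} (m : X → ℝ) (p : X → X → ℝ) (lam : ℝ) : Prop :=
  ∀ f g : X → ℝ, (Function.support f).Finite → (Function.support g).Finite →
    |∑' s, m s * g s * ∑' t, p s t * f t| ≤
      lam * Real.sqrt (∑' x, m x * f x ^ 2) * Real.sqrt (∑' x, m x * g x ^ 2)

/-- (H4): there is a weight `m` for which `P` is bounded of norm at most `lam` on `ℓ²(I,m)`. -/
def H4 (p : Word → Word → ℝ) (m : Word → ℝ) (lam : ℝ) : Prop :=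
  (∀ x, 0 < m x) ∧ opNormBound m p lam

/-- Substochasticity: `Σ_t p(s,t) ≤ 1` for every `s`. -/
def Substochastic (p : Word → Word → ℝ) : Prop :=
  ∀ s, (∑' t, ENNReal.ofReal (p s t)) ≤ 1

/-- `b` is a `q`-perturbation of `p` on `Δ_z` (with constant `C`). -/
def Perturb (p b : Word → Word → ℝ) (z : Word) (q C : ℝ) : Prop :=
  ∀ s t, s ∈ Delta z → t ∈ Delta z →
    |b s t| ≤ p s t ∧ |b s t - p s t| ≤ C * q ^ s.length

/-- The word `ω|k = ω(k-1) ω(k-2) ⋯ ω(0)` of length `k` determined by an end `ω`. -/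
def endWord (ω : ℕ → Bool) (k : ℕ) : Word := (List.range k).reverse.map ω

/-- The last-entrance kernel `M_p(s,u)`: sum over paths from `s` to `u` of length at least
one whose second-to-last point lies outside `Δ_x`. -/
noncomputable def lastEnter (p : Word → Word → ℝ) (x s u : Word) : ℝ≥0∞ :=
  ∑' m : ℕ, ∑' σ : {σ : Fin (m + 2) → Word //
      σ ∈ pathSet Set.univ (m + 1) s u ∧ σ ((Fin.last m).castSucc) ∉ Delta x},
    weightE p (m + 1) σ.1

/-- The quantum integer `[n]_q = (q⁻ⁿ - qⁿ)/(q⁻¹ - q)`. -/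
noncomputable def qInt (q : ℝ) (n : ℕ) : ℝ := (q ^ (-(n : ℤ)) - q ^ (n : ℤ)) / (q⁻¹ - q)

/-- The lengths of the blocks in the canonical factorization of a word into maximal
alternating subwords. -/
def blockLens : Word → List ℕ
  | [] => []
  | [_] => [1]
  | a :: b :: rest =>
    match blockLens (b :: rest) with
    | [] => [1]
    | k :: ks => if a = b then 1 :: (k :: ks) else (k + 1) :: ks

/-- The quantum dimension `dim_q(x) = Π_i [|x_i| + 1]_q` over the blocks of `x`. -/
noncomputable def dimq (q : ℝ) (x : Word) : ℝ := ((blockLens x).map fun L => qInt q (L + 1)).prod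

/-- The classical dimension `dim(x) = Π_i (|x_i| + 1)` over the blocks of `x`. -/
noncomputable def dimn (x : Word) : ℝ := ((blockLens x).map fun L => (L + 1 : ℝ)).prod

/-- The involution `x ↦ x̄`: reverse the word and exchange the two letters. -/
def bar (x : Word) : Word := (x.map fun a => !a).reverse

/-- The fusion multiplicity `mᵗ_{r,s}`: the number of words `z` such that `r = r₀ z`,
`s = z̄ s₀`, `t = r₀ s₀` for some `r₀, s₀`. -/
noncomputable def fuse (r s t : Word) : ℕ :=
  {z : Word | ∃ r₀ s₀ : Word, r = r₀ ++ z ∧ s = bar z ++ s₀ ∧ t = r₀ ++ s₀}.ncard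

/-- A finitely supported probability measure on `Word`. -/
def IsProbMeasure (μ : Word → ℝ) : Prop :=
  (∀ x, 0 ≤ μ x) ∧ (Function.support μ).Finite ∧ ∑' x, μ x = 1

/-- The transition kernel `p_μ(s,t) = Σ_r μ(r) mᵗ_{r,s} dim_q(t)/(dim_q(r) dim_q(s))`. -/
noncomputable def pMu (q : ℝ) (μ : Word → ℝ) (s t : Word) : ℝ :=
  ∑' r, μ r * (fuse r s t : ℝ) * dimq q t / (dimq q r * dimq q s)

/-- The `q`-binomial coefficient. -/
noncomputable def qbinom (q : ℝ) (n k : ℕ) : ℝ :=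
  q ^ (-((k * (n - k) : ℕ) : ℤ)) *
    ∏ i ∈ Finset.range k, (1 - q ^ (2 * (n - i))) / (1 - q ^ (2 * (k - i)))

/-!
Put `c r = μ r / dim_q r` and `A(s,t) = ∑ r, c r * mᵗ_{r,s}`, so that
`p_μ⁽ⁿ⁾(s,t) = A⁽ⁿ⁾(s,t) * dim_q t / dim_q s` for every `n`. It remains to see that `A⁽ⁿ⁾ ≤ λⁿ`
entrywise. Since `∑ t, mᵗ_{r,s} * dim t = dim r * dim s`, the function `dim` is an eigenvector of
`A` for the eigenvalue `λ`; by Frobenius reciprocity `mᵗ_{r,s} = mˢ_{r̄,t}` and `dim r̄ = dim r`, it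
is also one of the transpose of `A`, and the Schur test applies. Finally `λ < 1` because
`n < [n]_q` for `n ≥ 2`, hence `dim r < dim_q r` for every `r ≠ e`.
-/

section BlockProd

/-- The product `∏ᵢ f(|xᵢ|)` over the alternating blocks of `x`. With `f n = n + 1` it is `dimn`,
with `f n = [n + 1]_q` it is `dimq q`. -/
def blockProd {R : Type*} [Monoid R] (f : ℕ → R) (x : Word) : R := ((blockLens x).map f).prod

/-- The recursion of the Chebyshev polynomials of the second kind, obeyed by the dimensions of the
irreducible representations of `SU(2)` and of its `q`-deformations. -/
structure IsChebyshevSeq {R : Type*} [Ring R] (f : ℕ → R) : Prop where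
  zero : f 0 = 1
  add_two (n : ℕ) : f (n + 2) = f 1 * f (n + 1) - f n

lemma exists_blockLens_cons (a : Bool) (x : Word) :
    ∃ k ks, blockLens (a :: x) = (k + 1) :: ks ∧
      (k = 0 ∧ blockLens x = ks ∨ blockLens x = k :: ks) := by
  induction x generalizing a with
  | nil => exact ⟨0, [], rfl, .inl ⟨rfl, rfl⟩⟩
  | cons b x ih =>
    obtain ⟨k, ks, h, -⟩ := ih b
    by_cases hab : a = b
    · exact ⟨0, (k + 1) :: ks, by simp [blockLens, h, hab], .inl ⟨rfl, h⟩⟩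
    · exact ⟨k + 1, ks, by simp [blockLens, h, hab], .inr h⟩

lemma blockLens_ne_nil {x : Word} (hx : x ≠ []) : blockLens x ≠ [] := by
  obtain ⟨a, y, rfl⟩ := List.exists_cons_of_ne_nil hx
  obtain ⟨k, ks, h, -⟩ := exists_blockLens_cons a y
  simp [h]

lemma pos_of_mem_blockLens {x : Word} {L : ℕ} (hL : L ∈ blockLens x) : 0 < L := by
  induction x with
  | nil => simp [blockLens] at hL
  | cons a x ih =>
    obtain ⟨k, ks, h, hx⟩ := exists_blockLens_cons a x
    rw [h, List.mem_cons] at hL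
    rcases hL with rfl | hL
    · exact k.succ_pos
    · exact ih (by rcases hx with ⟨-, hx⟩ | hx <;> simp [hx, hL])

variable {R : Type*} [CommRing R] {f : ℕ → R}

lemma blockProd_nil : blockProd f [] = 1 := rfl

lemma blockProd_singleton (a : Bool) : blockProd f [a] = f 1 := by simp [blockProd, blockLens]

lemma blockProd_cons_cons (hf : IsChebyshevSeq f) (a b : Bool) (x : Word) :
    blockProd f (a :: b :: x) =
      f 1 * blockProd f (b :: x) - if b = !a then blockProd f x else 0 := by
  obtain ⟨k, ks, hbx, hx⟩ := exists_blockLens_cons b x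
  by_cases hab : a = b
  · simp [blockProd, blockLens, hbx, hab]
  · have hx : blockProd f x = f k * (ks.map f).prod := by
      rcases hx with ⟨rfl, hx⟩ | hx <;> simp [blockProd, hx, hf.zero]
    rw [if_pos (Bool.eq_not_iff.2 (Ne.symm hab)), hx]
    simp only [blockProd, blockLens, hbx, hab, if_false, List.map_cons, List.prod_cons, hf.add_two]
    ring

lemma blockProd_append_cons_cons (hf : IsChebyshevSeq f) (a b : Bool) (s : Word) : ∀ r : Word,
    blockProd f (r ++ a :: b :: s) =
      blockProd f (r ++ [a]) * blockProd f (b :: s) -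
        if b = !a then blockProd f r * blockProd f s else 0
  | [] => by simp [blockProd_cons_cons hf, blockProd_singleton, blockProd_nil]
  | [c] => by
    simp only [List.cons_append, List.nil_append, blockProd_cons_cons hf, blockProd_singleton,
      blockProd_nil]
    split_ifs <;> ring
  | c :: d :: r => by
    have ih₁ := blockProd_append_cons_cons hf a b s (d :: r)
    have ih₂ := blockProd_append_cons_cons hf a b s r
    simp only [List.cons_append, blockProd_cons_cons hf c d] at ih₁ ⊢
    rw [ih₁, ih₂]
    split_ifs <;> ring

lemma bar_nil : bar [] = [] := rfl

lemma bar_append (x y : Word) : bar (x ++ y) = bar y ++ bar x := by simp [bar]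

lemma bar_cons (a : Bool) (x : Word) : bar (a :: x) = bar x ++ [!a] := by simp [bar]

lemma bar_involutive : Function.Involutive bar := fun x => by simp [bar, Function.comp_def]

lemma blockProd_bar (hf : IsChebyshevSeq f) : ∀ x : Word, blockProd f (bar x) = blockProd f x
  | [] => rfl
  | [a] => by simp [bar, blockProd_singleton]
  | a :: b :: x => by
    have ih₁ := blockProd_bar hf (b :: x)
    have ih₂ := blockProd_bar hf x
    simp only [bar_cons, List.append_assoc, List.singleton_append] at ih₁ ⊢
    rw [blockProd_append_cons_cons hf, ih₁, ih₂, blockProd_cons_cons hf, blockProd_singleton,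
      blockProd_nil]
    cases a <;> cases b <;> simp [mul_comm]

end BlockProd

section Fusion

/-- The words `z` counted by the fusion multiplicity `fuse r s t`: those for which cancelling `z`
at the end of `r` against `bar z` at the beginning of `s` leaves `t`. -/
def contractions (r s t : Word) : Set Word :=
  {z : Word | ∃ r₀ s₀ : Word, r = r₀ ++ z ∧ s = bar z ++ s₀ ∧ t = r₀ ++ s₀}

lemma fuse_eq_ncard_contractions (r s t : Word) : fuse r s t = (contractions r s t).ncard := rfl

lemma finite_contractions (r s t : Word) : (contractions r s t).Finite :=
  r.tails.finite_toSet.subset fun z ⟨r₀, _, hr, _⟩ => (List.mem_tails z r).2 ⟨r₀, hr.symm⟩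

lemma nil_mem_contractions {r s t : Word} : [] ∈ contractions r s t ↔ t = r ++ s := by
  simp [contractions, bar_nil]

lemma concat_mem_contractions {r s t z : Word} {a b c : Bool} :
    z ++ [c] ∈ contractions (r ++ [a]) (b :: s) t ↔ c = a ∧ b = !a ∧ z ∈ contractions r s t := by
  simp only [contractions, bar_append, bar_cons, bar_nil, Set.mem_ofPred_eq, ← List.append_assoc,
    List.nil_append, List.cons_append, List.cons.injEq]
  constructor
  · rintro ⟨r₀, s₀, hr, ⟨hb, hs⟩, ht⟩
    obtain ⟨hr_init, hr_last⟩ := List.append_inj' hr rfl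
    obtain rfl := List.singleton_inj.1 hr_last
    exact ⟨rfl, hb, r₀, s₀, hr_init, hs, ht⟩
  · rintro ⟨hc, hb, r₀, s₀, hr, hs, ht⟩
    exact ⟨r₀, s₀, by rw [hr, hc], ⟨by rw [hb, hc], hs⟩, ht⟩

lemma fuse_eq_ite {r s t : Word} (h : contractions r s t ⊆ {[]}) :
    fuse r s t = if t = r ++ s then 1 else 0 := by
  rw [fuse_eq_ncard_contractions]
  rcases Set.subset_singleton_iff_eq.1 h with h | h <;> simp [h, ← nil_mem_contractions]

lemma fuse_nil_left (s t : Word) : fuse [] s t = if t = s then 1 else 0 :=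
  fuse_eq_ite fun _ ⟨_, _, hr, _⟩ => (List.append_eq_nil_iff.1 hr.symm).2

lemma fuse_nil_right (r t : Word) : fuse r [] t = if t = r then 1 else 0 := by
  have h : contractions r [] t ⊆ {[]} := by
    rintro z ⟨_, _, -, hs, -⟩
    rw [Set.mem_singleton_iff, ← bar_involutive z, (List.append_eq_nil_iff.1 hs.symm).1, bar_nil]
  simpa using fuse_eq_ite h

lemma fuse_concat_cons (r s t : Word) (a b : Bool) :
    fuse (r ++ [a]) (b :: s) t =
      (if t = r ++ a :: b :: s then 1 else 0) + if b = !a then fuse r s t else 0 := by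
  have h_contractions : contractions (r ++ [a]) (b :: s) t =
      {z | z = [] ∧ t = r ++ a :: b :: s} ∪
        (· ++ [a]) '' {z | b = !a ∧ z ∈ contractions r s t} := by
    ext z
    rcases List.eq_nil_or_concat' z with rfl | ⟨z, c, rfl⟩
    · simp [nil_mem_contractions]
    · simp only [concat_mem_contractions, Set.mem_union, Set.mem_ofPred_eq, List.append_eq_nil_iff,
        List.cons_ne_self, and_false, false_and, Set.mem_image, List.append_singleton_inj]
      grind
  have h_disjoint : Disjoint {z | z = [] ∧ t = r ++ a :: b :: s}
      ((· ++ [a]) '' {z | b = !a ∧ z ∈ contractions r s t}) := by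
    simp [Set.disjoint_left]
  have h_finite : ((· ++ [a]) '' {z | b = !a ∧ z ∈ contractions r s t}).Finite :=
    ((finite_contractions r s t).subset fun z hz => hz.2).image _
  rw [fuse_eq_ncard_contractions, h_contractions, Set.ncard_union_eq h_disjoint
    ((Set.finite_singleton []).subset fun z hz => hz.1) h_finite,
    Set.ncard_image_of_injective _ (List.append_left_injective [a])]
  congr 1
  · split_ifs with ht <;> simp [ht]
  · split_ifs with hb <;> simp [hb, fuse_eq_ncard_contractions]

/-- If `r = r₀ z`, `s = z̄ s₀` and `t = r₀ s₀`, then `r̄ = z̄ r̄₀`, so cancelling `r̄₀` against the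
beginning of `t` leaves `z̄ s₀ = s`. -/
lemma fuse_le_fuse_bar (r s t : Word) : fuse r s t ≤ fuse (bar r) t s := by
  have take_eq {r₀ z : Word} (hr : r = r₀ ++ z) : r.take (r.length - z.length) = r₀ := by simp [hr]
  refine Set.ncard_le_ncard_of_injOn (fun z => bar (r.take (r.length - z.length))) ?_ ?_
    (finite_contractions _ _ _)
  · rintro z ⟨r₀, s₀, hr, hs, ht⟩
    exact ⟨bar z, s₀, by rw [take_eq hr, hr, bar_append],
      by rw [take_eq hr, bar_involutive, ht], hs⟩
  · rintro z ⟨r₀, s₀, hr, -⟩ z' ⟨r₀', s₀', hr', -⟩ h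
    have h_prefix : r₀ = r₀' := by
      simpa only [take_eq hr, take_eq hr'] using bar_involutive.injective h
    exact List.append_cancel_left (hr.symm.trans (h_prefix ▸ hr'))

lemma fuse_bar (r s t : Word) : fuse (bar r) t s = fuse r s t :=
  le_antisymm ((fuse_le_fuse_bar (bar r) t s).trans_eq (by rw [bar_involutive]))
    (fuse_le_fuse_bar r s t)

/-- Cancelling the last letter of `r` against the first letter of `s` splits the sum over `t` in the
same way as the recursion `blockProd_append_cons_cons` splits the product. -/
lemma hasSum_fuse_mul_blockProd {R : Type*} [CommRing R] [TopologicalSpace R] [ContinuousAdd R]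
    {f : ℕ → R} (hf : IsChebyshevSeq f) (r s : Word) :
    HasSum (fun t => (fuse r s t : R) * blockProd f t) (blockProd f r * blockProd f s) := by
  have hasSum_single (x : Word) :
      HasSum (fun t => ((if t = x then 1 else 0 : ℕ) : R) * blockProd f t) (blockProd f x) := by
    convert hasSum_single x fun t ht => ?_ <;> simp_all
  induction r using List.reverseRecOn generalizing s with
  | nil => simpa only [fuse_nil_left, blockProd_nil, one_mul] using hasSum_single s
  | append_singleton r a ih =>
    cases s with
    | nil => simpa only [fuse_nil_right, blockProd_nil, mul_one] using hasSum_single (r ++ [a])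
    | cons b s =>
      have h_cancel : HasSum
          (fun t => ((if b = !a then fuse r s t else 0 : ℕ) : R) * blockProd f t)
          (if b = !a then blockProd f r * blockProd f s else 0) := by
        split_ifs
        · exact ih s
        · simp
      simpa only [fuse_concat_cons, Nat.cast_add, add_mul, blockProd_append_cons_cons hf,
        sub_add_cancel] using (hasSum_single (r ++ a :: b :: s)).add h_cancel

end Fusion

section QuantumDimension

variable {q : ℝ}

lemma qInt_zero (q : ℝ) : qInt q 0 = 0 := by simp [qInt]

lemma qInt_add_one (hq : 0 < q) (hq1 : q ≠ 1) (n : ℕ) :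
    qInt q (n + 1) = qInt q n + 1 + (1 - q ^ n) * (1 - q ^ (n + 1)) / (q ^ n * (1 + q)) := by
  have h_denom : 1 - q ^ 2 ≠ 0 := by
    rw [sub_ne_zero, ne_comm, Ne, pow_eq_one_iff_of_nonneg hq.le two_ne_zero]
    exact hq1
  simp only [qInt, zpow_neg, zpow_natCast]
  field_simp
  ring

lemma one_sub_pow_mul_one_sub_pow_pos (hq : 0 < q) (hq1 : q ≠ 1) {m n : ℕ} (hm : m ≠ 0)
    (hn : n ≠ 0) : 0 < (1 - q ^ m) * (1 - q ^ n) := by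
  rcases hq1.lt_or_gt with h | h
  · exact mul_pos (sub_pos.2 (pow_lt_one₀ hq.le h hm)) (sub_pos.2 (pow_lt_one₀ hq.le h hn))
  · exact mul_pos_of_neg_of_neg (sub_neg.2 (one_lt_pow₀ h hm)) (sub_neg.2 (one_lt_pow₀ h hn))

lemma qInt_add_one_lt (hq : 0 < q) (hq1 : q ≠ 1) {n : ℕ} (hn : n ≠ 0) :
    qInt q n + 1 < qInt q (n + 1) := by
  rw [qInt_add_one hq hq1, lt_add_iff_pos_right]
  exact div_pos (one_sub_pow_mul_one_sub_pow_pos hq hq1 hn n.succ_ne_zero) (by positivity)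

lemma qInt_one (hq : 0 < q) (hq1 : q ≠ 1) : qInt q 1 = 1 := by
  simpa [qInt_zero] using qInt_add_one hq hq1 0

lemma natCast_le_qInt (hq : 0 < q) (hq1 : q ≠ 1) (n : ℕ) : (n : ℝ) ≤ qInt q n := by
  induction n with
  | zero => simp [qInt_zero]
  | succ n ih =>
    rcases eq_or_ne n 0 with rfl | hn
    · simp [qInt_one hq hq1]
    · push_cast
      linarith [qInt_add_one_lt hq hq1 hn]

lemma natCast_lt_qInt (hq : 0 < q) (hq1 : q ≠ 1) {n : ℕ} (hn : 2 ≤ n) : (n : ℝ) < qInt q n := by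
  obtain ⟨n, rfl⟩ : ∃ m, n = m + 1 := ⟨n - 1, by lia⟩
  push_cast
  linarith [natCast_le_qInt hq hq1 n, qInt_add_one_lt hq hq1 (n := n) (by lia)]

lemma dimn_eq_blockProd (x : Word) : dimn x = blockProd (fun n : ℕ => (n + 1 : ℝ)) x := by
  -- In `dimn` the cast to `ℝ` is applied to the list `blockLens x`, through the monad `List`.
  simp only [dimn, blockProd, List.bind_eq_flatMap, List.pure_def, ← List.map_eq_flatMap,
    List.map_map, Function.comp_def]

lemma isChebyshevSeq_natCast_add_one : IsChebyshevSeq fun n : ℕ => (n + 1 : ℝ) where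
  zero := by simp
  add_two n := by push_cast; ring

lemma dimn_bar (x : Word) : dimn (bar x) = dimn x := by
  simp only [dimn_eq_blockProd, blockProd_bar isChebyshevSeq_natCast_add_one]

lemma dimn_pos (x : Word) : 0 < dimn x := by
  rw [dimn_eq_blockProd]
  refine List.prod_pos fun a ha => ?_
  obtain ⟨L, -, rfl⟩ := List.mem_map.1 ha
  positivity

lemma hasSum_fuse_mul_dimn (r s : Word) :
    HasSum (fun t => fuse r s t * dimn t) (dimn r * dimn s) := by
  simpa only [dimn_eq_blockProd] using hasSum_fuse_mul_blockProd isChebyshevSeq_natCast_add_one r s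

lemma dimn_le_dimq (hq : 0 < q) (hq1 : q ≠ 1) (x : Word) : dimn x ≤ dimq q x := by
  rw [dimn_eq_blockProd]
  exact List.prod_map_le_prod_map₀ _ _ (fun L _ => by positivity)
    fun L _ => by exact_mod_cast natCast_le_qInt hq hq1 (L + 1)

lemma dimq_pos (hq : 0 < q) (hq1 : q ≠ 1) (x : Word) : 0 < dimq q x :=
  (dimn_pos x).trans_le (dimn_le_dimq hq hq1 x)

lemma dimn_lt_dimq (hq : 0 < q) (hq1 : q ≠ 1) {x : Word} (hx : x ≠ []) : dimn x < dimq q x := by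
  rw [dimn_eq_blockProd]
  refine List.prod_map_lt_prod_map (blockLens_ne_nil hx) _ _ (fun L _ => by positivity)
    fun L hL => ?_
  exact_mod_cast natCast_lt_qInt hq hq1 (Nat.succ_le_succ (pos_of_mem_blockLens hL))

end QuantumDimension

section NStep

variable {X : Type*} {Ω : Set X} {a : X → X → ℝ}

lemma weightE_succ (n : ℕ) (σ : Fin (n + 2) → X) :
    weightE a (n + 1) σ = ENNReal.ofReal (a (σ 0) (σ 1)) * weightE a n (Fin.tail σ) :=
  Fin.prod_univ_succ _

lemma weightE_rev (n : ℕ) (σ : Fin (n + 1) → X) :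
    weightE a n (σ ∘ Fin.rev) = weightE (flip a) n σ :=
  Fintype.prod_equiv Fin.revPerm _ _ fun i => by simp [flip, Fin.rev_castSucc, Fin.rev_succ]

lemma weightE_mul_div {h : X → ℝ} (hh : ∀ x, 0 < h x) (n : ℕ) (σ : Fin (n + 1) → X) :
    weightE (fun u v => a u v * (h v / h u)) n σ =
      weightE a n σ * ENNReal.ofReal (h (σ (Fin.last n)) / h (σ 0)) := by
  have h_div_nonneg (x y : X) : 0 ≤ h x / h y := (div_pos (hh x) (hh y)).le
  induction n with
  | zero => simp [weightE, div_self (hh _).ne']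
  | succ n ih =>
    have h_ratio : h (σ (Fin.last (n + 1))) / h (σ 0) =
        h (σ 1) / h (σ 0) * (h (σ (Fin.last (n + 1))) / h (σ 1)) := by
      rw [mul_comm, div_mul_div_cancel₀ (hh _).ne']
    rw [weightE_succ, ih, weightE_succ, ENNReal.ofReal_mul' (h_div_nonneg _ _), h_ratio,
      ENNReal.ofReal_mul (h_div_nonneg _ _)]
    simp only [Fin.tail, Fin.succ_last, Fin.succ_zero_eq_one]
    ring

lemma nStepE_zero_le [DecidableEq X] (s t : X) : nStepE Ω a 0 s t ≤ if s = t then 1 else 0 := by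
  have : Subsingleton (pathSet Ω 0 s t) := by
    refine ⟨fun σ τ => Subtype.ext <| funext fun i => ?_⟩
    rw [Fin.eq_zero i, σ.2.1, τ.2.1]
  rcases isEmpty_or_nonempty (pathSet Ω 0 s t) with h | ⟨⟨σ⟩⟩
  · simp [nStepE]
  · rw [if_pos (σ.2.1.symm.trans σ.2.2.1), nStepE,
      tsum_eq_single σ fun τ hτ => absurd (Subsingleton.elim τ σ) hτ]
    simp [weightE]

lemma nStepE_succ_le (n : ℕ) (s t : X) :
    nStepE Ω a (n + 1) s t ≤ ∑' v, ENNReal.ofReal (a s v) * nStepE Ω a n v t := by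
  let splitFirst (σ : pathSet Ω (n + 1) s t) : Σ v, pathSet Ω n v t :=
    ⟨σ.1 1, Fin.tail σ.1, rfl, σ.2.2.1, fun i => σ.2.2.2 i.succ⟩
  have splitFirst_injective : Function.Injective splitFirst := by
    intro σ τ h
    have h_tail : Fin.tail σ.1 = Fin.tail τ.1 := congrArg (fun p => p.2.1) h
    rw [Subtype.ext_iff, ← Fin.cons_self_tail σ.1, ← Fin.cons_self_tail τ.1, h_tail, σ.2.1, τ.2.1]
  calc nStepE Ω a (n + 1) s t
      = ∑' σ, ENNReal.ofReal (a s (splitFirst σ).1) * weightE a n (splitFirst σ).2.1 :=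
        tsum_congr fun σ => by rw [weightE_succ, σ.2.1]
    _ ≤ ∑' p : Σ v, pathSet Ω n v t, ENNReal.ofReal (a s p.1) * weightE a n p.2.1 :=
        ENNReal.tsum_comp_le_tsum_of_injective splitFirst_injective _
    _ = ∑' v, ENNReal.ofReal (a s v) * nStepE Ω a n v t := by
        simp only [ENNReal.tsum_sigma', ENNReal.tsum_mul_left, nStepE]

lemma nStepE_flip (n : ℕ) (s t : X) : nStepE Ω (flip a) n s t = nStepE Ω a n t s := by
  let reversal : pathSet Ω n s t ≃ pathSet Ω n t s :=
    (Fin.revPerm.arrowCongr (Equiv.refl X)).subtypeEquiv fun σ => by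
      simp [pathSet, and_left_comm, Fin.rev_surjective.forall (p := fun i => σ i ∈ Ω)]
  rw [nStepE, nStepE, ← reversal.tsum_eq]
  exact tsum_congr fun σ => (weightE_rev n σ.1).symm

lemma nStepE_mul_div {h : X → ℝ} (hh : ∀ x, 0 < h x) (n : ℕ) (s t : X) :
    nStepE Ω (fun u v => a u v * (h v / h u)) n s t =
      nStepE Ω a n s t * ENNReal.ofReal (h t / h s) := by
  simp only [nStepE, weightE_mul_div hh, ← ENNReal.tsum_mul_right]
  refine tsum_congr fun σ => ?_
  rw [σ.2.1, σ.2.2.1]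

variable {w : X → ℝ≥0∞} {l : ℝ≥0∞}

lemma nStepE_mul_le (hw : ∀ s, ∑' t, ENNReal.ofReal (a s t) * w t ≤ l * w s) (n : ℕ) (s t : X) :
    nStepE Ω a n s t * w t ≤ l ^ n * w s := by
  classical
  induction n generalizing s with
  | zero =>
    calc nStepE Ω a 0 s t * w t
        ≤ (if s = t then 1 else 0) * w t := by gcongr; exact nStepE_zero_le s t
      _ ≤ l ^ 0 * w s := by split_ifs with hst <;> simp [hst]
  | succ n ih =>
    calc nStepE Ω a (n + 1) s t * w t
        ≤ (∑' v, ENNReal.ofReal (a s v) * nStepE Ω a n v t) * w t := by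
          gcongr; exact nStepE_succ_le n s t
      _ = ∑' v, ENNReal.ofReal (a s v) * (nStepE Ω a n v t * w t) := by
          simp only [← ENNReal.tsum_mul_right, mul_assoc]
      _ ≤ ∑' v, ENNReal.ofReal (a s v) * (l ^ n * w v) :=
          ENNReal.tsum_le_tsum fun v => mul_le_mul_right (ih v) _
      _ = l ^ n * ∑' v, ENNReal.ofReal (a s v) * w v := by
          simp only [← ENNReal.tsum_mul_left, mul_left_comm]
      _ ≤ l ^ n * (l * w s) := by gcongr; exact hw s
      _ = l ^ (n + 1) * w s := by ring

/-- The Schur test: the row bound gives `l ^ n * (w s / w t)`, the column bound gives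
`l ^ n * (w t / w s)`, and one of the two ratios is at most `1`. -/
lemma nStepE_le_pow (hw₀ : ∀ x, w x ≠ 0) (hw_top : ∀ x, w x ≠ ∞)
    (h_row : ∀ s, ∑' t, ENNReal.ofReal (a s t) * w t ≤ l * w s)
    (h_col : ∀ t, ∑' s, ENNReal.ofReal (a s t) * w s ≤ l * w t) (n : ℕ) (s t : X) :
    nStepE Ω a n s t ≤ l ^ n := by
  rcases le_total (w s) (w t) with h | h
  · rw [← ENNReal.mul_le_mul_iff_left (hw₀ t) (hw_top t)]
    exact (nStepE_mul_le h_row n s t).trans (by gcongr)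
  · rw [← ENNReal.mul_le_mul_iff_left (hw₀ s) (hw_top s), ← nStepE_flip]
    exact (nStepE_mul_le h_col n t s).trans (by gcongr)

end NStep

section FusionKernel

/-- The kernel of left fusion by the formal sum `∑ r, c r • r` of words. -/
noncomputable def fusionKernel (c : Word → ℝ) (s t : Word) : ℝ := ∑' r, c r * fuse r s t

variable {c : Word → ℝ}

lemma fusionKernel_bar (c : Word → ℝ) (s t : Word) :
    fusionKernel (fun r => c (bar r)) t s = fusionKernel c s t := by
  rw [fusionKernel, fusionKernel, ← bar_involutive.toPerm.tsum_eq]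
  refine tsum_congr fun r => ?_
  rw [Function.Involutive.coe_toPerm, bar_involutive r, fuse_bar]

lemma tsum_fusionKernel_mul_dimn_le (hc : ∀ r, 0 ≤ c r) (hc_sum : Summable fun r => c r * dimn r)
    (s : Word) :
    ∑' t, ENNReal.ofReal (fusionKernel c s t) * ENNReal.ofReal (dimn t) ≤
      ENNReal.ofReal (∑' r, c r * dimn r) * ENNReal.ofReal (dimn s) := by
  have h_nonneg (r t : Word) : 0 ≤ c r * fuse r s t := mul_nonneg (hc r) (Nat.cast_nonneg _)
  have ofReal_fusionKernel_le (t : Word) :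
      ENNReal.ofReal (fusionKernel c s t) ≤ ∑' r, ENNReal.ofReal (c r * fuse r s t) := by
    by_cases h : Summable fun r => c r * fuse r s t
    · exact (ENNReal.ofReal_tsum_of_nonneg (h_nonneg · t) h).le
    · simp [fusionKernel, tsum_eq_zero_of_not_summable h]
  have tsum_fuse (r : Word) : ∑' t, ENNReal.ofReal (c r * fuse r s t) * ENNReal.ofReal (dimn t) =
      ENNReal.ofReal (c r * dimn r) * ENNReal.ofReal (dimn s) := by
    have h_sum := (hasSum_fuse_mul_dimn r s).mul_left (c r)
    simp only [← mul_assoc] at h_sum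
    simp only [← ENNReal.ofReal_mul (h_nonneg r _)]
    rw [← ENNReal.ofReal_tsum_of_nonneg
      (fun t => mul_nonneg (h_nonneg r t) (dimn_pos t).le) h_sum.summable, h_sum.tsum_eq,
      ENNReal.ofReal_mul' (dimn_pos s).le]
  calc ∑' t, ENNReal.ofReal (fusionKernel c s t) * ENNReal.ofReal (dimn t)
      ≤ ∑' t, (∑' r, ENNReal.ofReal (c r * fuse r s t)) * ENNReal.ofReal (dimn t) := by
        gcongr with t; exact ofReal_fusionKernel_le t
    _ = ∑' r, ∑' t, ENNReal.ofReal (c r * fuse r s t) * ENNReal.ofReal (dimn t) := by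
        simp only [← ENNReal.tsum_mul_right]; exact ENNReal.tsum_comm
    _ = ENNReal.ofReal (∑' r, c r * dimn r) * ENNReal.ofReal (dimn s) := by
        simp only [tsum_fuse, ENNReal.tsum_mul_right]
        rw [ENNReal.ofReal_tsum_of_nonneg (fun r => mul_nonneg (hc r) (dimn_pos r).le) hc_sum]

lemma nStepE_fusionKernel_le (hc : ∀ r, 0 ≤ c r) (hc_sum : Summable fun r => c r * dimn r)
    (Ω : Set Word) (n : ℕ) (s t : Word) :
    nStepE Ω (fusionKernel c) n s t ≤ ENNReal.ofReal (∑' r, c r * dimn r) ^ n := by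
  have h_bar : (fun r => c (bar r) * dimn r) = (fun r => c r * dimn r) ∘ bar_involutive.toPerm :=
    funext fun r => by simp [dimn_bar]
  refine nStepE_le_pow (w := fun x => ENNReal.ofReal (dimn x))
    (fun x => (ENNReal.ofReal_pos.2 (dimn_pos x)).ne') (fun x => ENNReal.ofReal_ne_top)
    (tsum_fusionKernel_mul_dimn_le hc hc_sum) (fun t => ?_) n s t
  have h_row := tsum_fusionKernel_mul_dimn_le (fun r => hc (bar r))
    (by rw [h_bar]; exact (Equiv.summable_iff bar_involutive.toPerm).2 hc_sum) t
  have h_tsum : ∑' r, c (bar r) * dimn r = ∑' r, c r * dimn r := by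
    rw [h_bar]; exact bar_involutive.toPerm.tsum_eq fun r => c r * dimn r
  simpa only [fusionKernel_bar, h_tsum] using h_row

end FusionKernel

section RandomWalk

variable {q : ℝ} {μ : Word → ℝ}

lemma pMu_eq_fusionKernel_mul_div (q : ℝ) (μ : Word → ℝ) :
    pMu q μ = fun s t => fusionKernel (fun r => μ r / dimq q r) s t * (dimq q t / dimq q s) := by
  funext s t
  rw [pMu, fusionKernel, ← tsum_mul_right]
  exact tsum_congr fun r => by ring

lemma nStepE_pMu_le (hq : 0 < q) (hq1 : q ≠ 1) (hμ : ∀ r, 0 ≤ μ r)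
    (hμ_sum : Summable fun r => μ r * dimn r / dimq q r) (Ω : Set Word) (n : ℕ) (s t : Word) :
    nStepE Ω (pMu q μ) n s t ≤
      ENNReal.ofReal ((∑' r, μ r * dimn r / dimq q r) ^ n * dimq q t / dimq q s) := by
  have hpos := dimq_pos hq hq1
  have hc (r : Word) : 0 ≤ μ r / dimq q r := div_nonneg (hμ r) (hpos r).le
  simp only [mul_div_right_comm] at hμ_sum
  have h_nonneg : 0 ≤ ∑' r, μ r / dimq q r * dimn r :=
    tsum_nonneg fun r => mul_nonneg (hc r) (dimn_pos r).le
  rw [pMu_eq_fusionKernel_mul_div, nStepE_mul_div hpos, mul_div_assoc,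
    ENNReal.ofReal_mul' (div_pos (hpos t) (hpos s)).le]
  simp only [mul_div_right_comm]
  rw [ENNReal.ofReal_pow h_nonneg]
  gcongr
  exact nStepE_fusionKernel_le hc hμ_sum Ω n s t

lemma mul_dimn_div_dimq_nonneg (hq : 0 < q) (hq1 : q ≠ 1) (hμ : ∀ r, 0 ≤ μ r) (r : Word) :
    0 ≤ μ r * dimn r / dimq q r :=
  div_nonneg (mul_nonneg (hμ r) (dimn_pos r).le) (dimq_pos hq hq1 r).le

lemma mul_dimn_div_dimq_le (hq : 0 < q) (hq1 : q ≠ 1) (hμ : ∀ r, 0 ≤ μ r) (r : Word) :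
    μ r * dimn r / dimq q r ≤ μ r :=
  div_le_of_le_mul₀ (dimq_pos hq hq1 r).le (hμ r)
    (mul_le_mul_of_nonneg_left (dimn_le_dimq hq hq1 r) (hμ r))

lemma summable_mul_dimn_div_dimq (hq : 0 < q) (hq1 : q ≠ 1) (hμ : ∀ r, 0 ≤ μ r)
    (hμ_sum : Summable μ) : Summable fun r => μ r * dimn r / dimq q r :=
  hμ_sum.of_nonneg_of_le (mul_dimn_div_dimq_nonneg hq hq1 hμ) (mul_dimn_div_dimq_le hq hq1 hμ)

lemma tsum_mul_dimn_div_dimq_lt_one (hq : 0 < q) (hq1 : q ≠ 1) (hμ : ∀ r, 0 ≤ μ r)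
    (hμ_one : HasSum μ 1) (h_nil : μ [] < 1) : ∑' r, μ r * dimn r / dimq q r < 1 := by
  obtain ⟨r, hr, hμr⟩ : ∃ r, r ≠ [] ∧ μ r ≠ 0 := by
    by_contra! h
    exact h_nil.ne (hμ_one.unique (hasSum_single [] h)).symm
  rw [← hμ_one.tsum_eq]
  refine Summable.tsum_lt_tsum (i := r) (mul_dimn_div_dimq_le hq hq1 hμ) ?_
    (summable_mul_dimn_div_dimq hq hq1 hμ hμ_one.summable) hμ_one.summable
  rw [div_lt_iff₀ (dimq_pos hq hq1 r)]
  exact mul_lt_mul_of_pos_left (dimn_lt_dimq hq hq1 hr) ((hμ r).lt_of_ne' hμr)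

lemma limsup_rpow_inv_natCast_le {u : ℕ → ℝ} {l : ℝ} (hu : ∀ n, 0 ≤ u n) (hl : 0 ≤ l)
    (h : ∀ n, u n ≤ l ^ n) :
    Filter.limsup (fun n : ℕ => u n ^ ((n : ℝ)⁻¹)) Filter.atTop ≤ l := by
  refine Filter.limsup_le_of_le
    (Filter.isCoboundedUnder_le_of_le Filter.atTop (x := 0) fun n => Real.rpow_nonneg (hu n) _) ?_
  filter_upwards [Filter.eventually_ne_atTop 0] with n hn
  calc u n ^ ((n : ℝ)⁻¹) ≤ (l ^ n) ^ ((n : ℝ)⁻¹) :=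
        Real.rpow_le_rpow (hu n) (h n) (inv_nonneg.2 n.cast_nonneg)
    _ = l := Real.pow_rpow_inv_natCast hl hn

theorem lem_4_1_remark_general (hq : 0 < q) (hq1 : q ≠ 1) (hμ : ∀ r, 0 ≤ μ r)
    (hμ_one : ∑' r, μ r = 1) :
    (∀ (n : ℕ) (s t : Word),
      nStepE Set.univ (pMu q μ) n s t ≤
        ENNReal.ofReal ((∑' r, μ r * dimn r / dimq q r) ^ n * dimq q t / dimq q s)) ∧
    (μ [] < 1 → ∑' r, μ r * dimn r / dimq q r < 1) ∧
    ∀ s : Word,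
      Filter.limsup (fun n : ℕ => (nStepE Set.univ (pMu q μ) n s s).toReal ^ ((n : ℝ)⁻¹))
        Filter.atTop ≤ ∑' r, μ r * dimn r / dimq q r := by
  have hμ_hasSum : HasSum μ 1 := by
    have hμ_summable : Summable μ := by
      by_contra h
      simp [tsum_eq_zero_of_not_summable h] at hμ_one
    exact hμ_one ▸ hμ_summable.hasSum
  have h_bound := nStepE_pMu_le hq hq1 hμ
    (summable_mul_dimn_div_dimq hq hq1 hμ hμ_hasSum.summable) Set.univ
  have h_nonneg : 0 ≤ ∑' r, μ r * dimn r / dimq q r :=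
    tsum_nonneg (mul_dimn_div_dimq_nonneg hq hq1 hμ)
  refine ⟨h_bound, tsum_mul_dimn_div_dimq_lt_one hq hq1 hμ hμ_hasSum, fun s => ?_⟩
  refine limsup_rpow_inv_natCast_le (fun n => ENNReal.toReal_nonneg) h_nonneg fun n => ?_
  refine ENNReal.toReal_le_of_le_ofReal (pow_nonneg h_nonneg n) ((h_bound n s s).trans_eq ?_)
  rw [mul_div_cancel_right₀ _ (dimq_pos hq hq1 s).ne']

end RandomWalk

/-- Lemma 4.1 together with the subsequent Remark: the `n`-step kernel satisfies
`p_μ⁽ⁿ⁾(s,t) ≤ λⁿ dim_q(t)/dim_q(s)` with `λ = Σ_r μ(r) dim(r)/dim_q(r)`; in particular,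
if `μ(e) < 1` then `λ < 1` and the spectral radius of the random walk is at most `λ`. -/
theorem lem_4_1_remark (q : ℝ) (hq : q ∈ Set.Ioo (0 : ℝ) 1) (μ : Word → ℝ)
    (hμ : IsProbMeasure μ) :
    (∀ (n : ℕ) (s t : Word),
      nStepE Set.univ (pMu q μ) n s t ≤
        ENNReal.ofReal ((∑' r, μ r * dimn r / dimq q r) ^ n * dimq q t / dimq q s)) ∧
    (μ [] < 1 →
      (∑' r, μ r * dimn r / dimq q r) < 1 ∧
      ∀ s : Word,
        Filter.limsup
            (fun n : ℕ => (nStepE Set.univ (pMu q μ) n s s).toReal ^ ((n : ℝ)⁻¹))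
            Filter.atTop ≤
          ∑' r, μ r * dimn r / dimq q r) := by
  obtain ⟨h_bound, h_lt, h_limsup⟩ := lem_4_1_remark_general hq.1 hq.2.ne hμ.1 hμ.2.2
  exact ⟨h_bound, fun h_nil => ⟨h_lt h_nil, h_limsup⟩⟩

end Paper
end

section
/- Let Ω be a countable set, p : Ω × Ω → [0,∞) a nonnegative kernel with G_p(s,t) < ∞ for all s,t ∈ Ω, b : Ω × Ω → ℝ a kernel with |b(s,t)| ≤ p(s,t) for all s,t, and Δ ⊆ Ω a subset. Then the series defining G_b (the Green kernel of b on Ω) and G_{b,Δ} (the Green kernel of the restriction of b to Δ × Δ) converge absolutely, and for all s,t ∈ Δ: |G_b(s,t) − G_{b,Δ}(s,t)| ≤ G_p(s,t) − G_{p,Δ}(s,t). (Comparison inequality used in the proof of Proposition 3.5 of the paper.) -/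
/-!
A Green kernel is a single sum over all finite paths from `s` to `t`. The paths that stay in `Δ`
are among those that stay in `Ω`, so `G_{a,Ω} - G_{a,Δ}` is the sum of the weights over the paths
that leave `Δ`. Along each of these the weight of `b` is at most that of `p` in absolute value, and
the triangle inequality concludes.
-/

open scoped ENNReal

namespace Paper

section SubsetSums

variable {ι G E : Type*} [AddCommGroup G] [UniformSpace G] [IsUniformAddGroup G] [CompleteSpace G]
  [NormedAddCommGroup E] [CompleteSpace E] {A B : Set ι}

lemma summable_subtype_mono {f : ι → G} (hBA : B ⊆ A) (hf : Summable fun i : A ↦ f i) :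
    Summable fun i : B ↦ f i :=
  hf.comp_injective (Set.inclusion_injective hBA)

lemma tsum_subtype_sub_tsum_subtype [T2Space G] {f : ι → G} (hBA : B ⊆ A)
    (hf : Summable fun i : A ↦ f i) :
    ∑' i : A, f i - ∑' i : B, f i = ∑' i : ↥(A \ B), f i := by
  have hB := summable_subtype_mono hBA hf
  have hdiff := summable_subtype_mono (Set.sdiff_subset (t := B)) hf
  rw [sub_eq_iff_eq_add', ← hB.tsum_union_disjoint Set.disjoint_sdiff_right hdiff,
    Set.union_sdiff_cancel hBA]

lemma norm_tsum_subtype_sub_le {f : ι → E} {g : ι → ℝ} (hBA : B ⊆ A)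
    (hfg : ∀ i ∈ A, ‖f i‖ ≤ g i) (hg : Summable fun i : A ↦ g i) :
    ‖∑' i : A, f i - ∑' i : B, f i‖ ≤ ∑' i : A, g i - ∑' i : B, g i := by
  have hf : Summable fun i : A ↦ f i := .of_norm_bounded hg fun i ↦ hfg i i.2
  have hg_diff := summable_subtype_mono (Set.sdiff_subset (t := B)) hg
  rw [tsum_subtype_sub_tsum_subtype hBA hf, tsum_subtype_sub_tsum_subtype hBA hg]
  exact tsum_of_norm_bounded hg_diff.hasSum fun i ↦ hfg i i.2.1

end SubsetSums

section Paths

variable {X : Type*} {Ω Δ : Set X} {a a' b p : X → X → ℝ} {s t : X}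
  {γ : Σ n : ℕ, Fin (n + 1) → X}

/-- The finite paths of arbitrary length from `s` to `t` staying in `Ω`, over which the Green
kernel of `Ω` is a single sum. They are a set in one type for all `Ω`, rather than the sigma type of
the `pathSet Ω n s t`, so that paths in different domains can be compared. -/
def finitePaths (Ω : Set X) (s t : X) : Set (Σ n : ℕ, Fin (n + 1) → X) :=
  {γ | γ.2 ∈ pathSet Ω γ.1 s t}

/-- The real weight of a path of unspecified length, the summand of the Green kernel. -/
noncomputable def pathWeight (a : X → X → ℝ) (γ : Σ n : ℕ, Fin (n + 1) → X) : ℝ :=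
  weightR a γ.1 γ.2

/-- Grouping the paths in `finitePaths Ω s t` by length. -/
def sigmaPathSetEquiv (Ω : Set X) (s t : X) :
    (Σ n, pathSet Ω n s t) ≃ finitePaths Ω s t where
  toFun γ := ⟨⟨γ.1, γ.2⟩, γ.2.2⟩
  invFun γ := ⟨γ.1.1, γ.1.2, γ.2⟩

lemma finitePaths_mono (hΔ : Δ ⊆ Ω) : finitePaths Δ s t ⊆ finitePaths Ω s t :=
  fun _ ⟨h_start, h_end, h_mem⟩ ↦ ⟨h_start, h_end, fun i ↦ hΔ (h_mem i)⟩

lemma greenE_eq_tsum_finitePaths :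
    greenE Ω a s t = ∑' γ : finitePaths Ω s t, weightE a γ.1.1 γ.1.2 :=
  (ENNReal.tsum_sigma' _).symm.trans
    ((sigmaPathSetEquiv Ω s t).tsum_eq fun γ ↦ weightE a γ.1.1 γ.1.2)

lemma greenR_eq_tsum_finitePaths (h : Summable fun γ : finitePaths Ω s t ↦ pathWeight a γ) :
    greenR Ω a s t = ∑' γ : finitePaths Ω s t, pathWeight a γ :=
  ((sigmaPathSetEquiv Ω s t).summable_iff.2 h).tsum_sigma.symm.trans
    ((sigmaPathSetEquiv Ω s t).tsum_eq fun γ ↦ pathWeight a γ)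

lemma greenE_mono_set (hΔ : Δ ⊆ Ω) : greenE Δ a s t ≤ greenE Ω a s t := by
  simp only [greenE_eq_tsum_finitePaths]
  exact ENNReal.tsum_mono_subtype (fun γ ↦ weightE a γ.1 γ.2) (finitePaths_mono hΔ)

lemma greenE_mono_kernel (h : ∀ u ∈ Ω, ∀ v ∈ Ω, a u v ≤ a' u v) :
    greenE Ω a s t ≤ greenE Ω a' s t :=
  ENNReal.tsum_le_tsum fun _ ↦ ENNReal.tsum_le_tsum fun ⟨_, _, _, h_mem⟩ ↦
    Finset.prod_le_prod' fun _ _ ↦ ENNReal.ofReal_le_ofReal (h _ (h_mem _) _ (h_mem _))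

lemma toReal_weightE (ha : ∀ u ∈ Ω, ∀ v ∈ Ω, 0 ≤ a u v) (hγ : γ ∈ finitePaths Ω s t) :
    (weightE a γ.1 γ.2).toReal = pathWeight a γ := by
  obtain ⟨-, -, h_mem⟩ := hγ
  rw [weightE, ENNReal.toReal_prod]
  exact Finset.prod_congr rfl fun _ _ ↦ ENNReal.toReal_ofReal (ha _ (h_mem _) _ (h_mem _))

lemma abs_pathWeight_le (hb : ∀ u ∈ Ω, ∀ v ∈ Ω, |b u v| ≤ p u v) (hγ : γ ∈ finitePaths Ω s t) :
    |pathWeight b γ| ≤ pathWeight p γ := by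
  obtain ⟨-, -, h_mem⟩ := hγ
  rw [pathWeight, weightR, Finset.abs_prod]
  exact Finset.prod_le_prod (fun _ _ ↦ abs_nonneg _) fun _ _ ↦ hb _ (h_mem _) _ (h_mem _)

lemma toReal_greenE (ha : ∀ u ∈ Ω, ∀ v ∈ Ω, 0 ≤ a u v) :
    (greenE Ω a s t).toReal = ∑' γ : finitePaths Ω s t, pathWeight a γ := by
  have h_ne_top (γ : finitePaths Ω s t) : weightE a γ.1.1 γ.1.2 ≠ ⊤ :=
    ENNReal.prod_ne_top fun _ _ ↦ ENNReal.ofReal_ne_top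
  rw [greenE_eq_tsum_finitePaths, ENNReal.tsum_toReal_eq h_ne_top]
  exact tsum_congr fun γ ↦ toReal_weightE ha γ.2

lemma summable_pathWeight_of_greenE_ne_top (ha : ∀ u ∈ Ω, ∀ v ∈ Ω, 0 ≤ a u v)
    (h : greenE Ω a s t ≠ ⊤) : Summable fun γ : finitePaths Ω s t ↦ pathWeight a γ := by
  rw [greenE_eq_tsum_finitePaths] at h
  exact (ENNReal.summable_toReal h).congr fun γ ↦ toReal_weightE ha γ.2

lemma abs_greenR_sub_le (hΔ : Δ ⊆ Ω) (hb : ∀ u ∈ Ω, ∀ v ∈ Ω, |b u v| ≤ p u v)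
    (hfin : greenE Ω p s t ≠ ⊤) :
    |greenR Ω b s t - greenR Δ b s t| ≤ (greenE Ω p s t).toReal - (greenE Δ p s t).toReal := by
  have hp : ∀ u ∈ Ω, ∀ v ∈ Ω, 0 ≤ p u v := fun u hu v hv ↦ (abs_nonneg _).trans (hb u hu v hv)
  have hpΔ : ∀ u ∈ Δ, ∀ v ∈ Δ, 0 ≤ p u v := fun u hu v hv ↦ hp u (hΔ hu) v (hΔ hv)
  have hp_sum := summable_pathWeight_of_greenE_ne_top hp hfin
  have hbΩ_sum : Summable fun γ : finitePaths Ω s t ↦ pathWeight b γ :=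
    .of_norm_bounded hp_sum fun γ ↦ abs_pathWeight_le hb γ.2
  have hbΔ_sum := summable_subtype_mono (finitePaths_mono hΔ) hbΩ_sum
  rw [greenR_eq_tsum_finitePaths hbΩ_sum, greenR_eq_tsum_finitePaths hbΔ_sum, toReal_greenE hp,
    toReal_greenE hpΔ, ← Real.norm_eq_abs]
  exact norm_tsum_subtype_sub_le (finitePaths_mono hΔ) (fun _ ↦ abs_pathWeight_le hb) hp_sum

theorem green_restriction_comparison_general (hΔ : Δ ⊆ Ω)
    (hb : ∀ u ∈ Ω, ∀ v ∈ Ω, |b u v| ≤ p u v) (hfin : greenE Ω p s t < ⊤) :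
    greenAbs Ω b s t < ⊤ ∧ greenAbs Δ b s t < ⊤ ∧
      |greenR Ω b s t - greenR Δ b s t| ≤ (greenE Ω p s t).toReal - (greenE Δ p s t).toReal :=
  have h_abs : greenAbs Ω b s t < ⊤ := (greenE_mono_kernel hb).trans_lt hfin
  ⟨h_abs, (greenE_mono_set hΔ).trans_lt h_abs, abs_greenR_sub_le hΔ hb hfin.ne⟩

end Paths

/-- Comparison inequality from the proof of Proposition 3.5: if `|b| ≤ p` and `G_p` is
everywhere finite, then the Green series of `b` and of its restriction to `Δ` converge
absolutely and `|G_b(s,t) − G_{b,Δ}(s,t)| ≤ G_p(s,t) − G_{p,Δ}(s,t)` on `Δ`. -/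
theorem green_restriction_comparison {X : Type*} [Countable X]
    (p : X → X → ℝ) (hp : ∀ s t, 0 ≤ p s t)
    (hfin : ∀ s t, greenE Set.univ p s t < ⊤)
    (b : X → X → ℝ) (hb : ∀ s t, |b s t| ≤ p s t) (Δ : Set X) :
    ∀ s ∈ Δ, ∀ t ∈ Δ,
      greenAbs Set.univ b s t < ⊤ ∧ greenAbs Δ b s t < ⊤ ∧
      |greenR Set.univ b s t - greenR Δ b s t| ≤
        (greenE Set.univ p s t).toReal - (greenE Δ p s t).toReal := by
  intro s _ t _
  exact green_restriction_comparison_general (Set.subset_univ Δ) (fun u _ v _ ↦ hb u v) (hfin s t)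

end Paper
end

section
/- Let p : I × I → [0,∞) satisfy hypotheses (H1), (H2) and (H3). Then there exists a constant C > 0, depending only on S, δ₀ and K, such that for all x ∈ I and all s,t ∈ Δ_x, the following inequality holds in [0,∞]: G_p(s,t) ≤ G_{p,Δ_x}(s,t) + C·G_p(s,x)·G_p(x,t). (Estimate established in the proof of Proposition 3.5 of the paper.) -/
open scoped ENNReal

namespace Paper

/-! A path from `s ∈ Δ_x` to `t` either stays in `Δ_x` or leaves it, and since geodesics leaving
`Δ_x` pass through `x`, a jump of range `S` out of `Δ_x` lands in the ball `B` of radius `S` around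
`x`. Hence `G(s,t) ≤ G_{Δ_x}(s,t) + ∑_{v ∈ B} G(s,v) G(v,t)`. This inequality follows from the
minimum principle, because its right-hand side is a supersolution on `Δ_x` and is at least
`G(v,v) G(v,t) ≥ G(v,t)` at every exit point `v`. The number of points of `B` is bounded
independently of `x`, and uniform irreducibility gives a Harnack inequality along the tree, which
replaces `v` by `x` in both factors at the cost of a constant. -/

section Paths

variable {X : Type*} {Ω : Set X} (a : X → X → ℝ) (n : ℕ)

theorem pathSet_zero_self {s : X} (hs : s ∈ Ω) : pathSet Ω 0 s s = {fun _ => s} := by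
  ext σ
  refine ⟨fun hσ => funext (Fin.forall_fin_one.2 hσ.1), ?_⟩
  rintro rfl
  exact ⟨rfl, rfl, fun _ => hs⟩

theorem pathSet_zero_of_ne {s t : X} (h : s ≠ t) : pathSet Ω 0 s t = ∅ :=
  Set.eq_empty_of_forall_notMem fun _ hσ => h (hσ.1.symm.trans hσ.2.1)

theorem nStepE_zero [DecidableEq X] {s : X} (hs : s ∈ Ω) (t : X) :
    nStepE Ω a 0 s t = if s = t then 1 else 0 := by
  split_ifs with h
  · subst h
    rw [nStepE, pathSet_zero_self hs, tsum_singleton _ fun σ => weightE a 0 σ]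
    exact Fin.prod_univ_zero _
  · rw [nStepE, pathSet_zero_of_ne h, tsum_empty]

/-- Prepending the starting point `s ∈ Ω` identifies the paths of length `n` ending at `t` with
the paths of length `n + 1` from `s` to `t`. -/
def pathSetConsEquiv {s : X} (hs : s ∈ Ω) (t : X) :
    (Σ u, pathSet Ω n u t) ≃ pathSet Ω (n + 1) s t where
  toFun σ := ⟨Fin.cons s σ.2.1, rfl, σ.2.2.2.1, Fin.cases hs σ.2.2.2.2⟩
  invFun σ := ⟨σ.1 1, Fin.tail σ.1, rfl, σ.2.2.1, fun i => σ.2.2.2 i.succ⟩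
  left_inv := by
    rintro ⟨_, τ, rfl, _⟩
    rfl
  right_inv := by
    rintro ⟨σ, rfl, _⟩
    exact Subtype.ext (Fin.cons_self_tail σ)

theorem weightE_cons {n : ℕ} (s : X) (σ : Fin (n + 1) → X) :
    weightE a (n + 1) (Fin.cons s σ) = ENNReal.ofReal (a s (σ 0)) * weightE a n σ :=
  Fin.prod_univ_succ _

theorem nStepE_succ {s : X} (hs : s ∈ Ω) (t : X) :
    nStepE Ω a (n + 1) s t = ∑' u, ENNReal.ofReal (a s u) * nStepE Ω a n u t := by
  rw [nStepE, ← (pathSetConsEquiv n hs t).tsum_eq, ENNReal.tsum_sigma']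
  refine tsum_congr fun u => ?_
  rw [nStepE, ← ENNReal.tsum_mul_left]
  refine tsum_congr ?_
  rintro ⟨σ, rfl, _⟩
  exact weightE_cons a s σ

/-- Time reversal of paths. -/
def pathSetRevEquiv (s t : X) : pathSet Ω n s t ≃ pathSet Ω n t s where
  toFun σ := ⟨σ.1 ∘ Fin.rev, by simpa [pathSet] using ⟨σ.2.2.1, σ.2.1, fun i => σ.2.2.2 _⟩⟩
  invFun σ := ⟨σ.1 ∘ Fin.rev, by simpa [pathSet] using ⟨σ.2.2.1, σ.2.1, fun i => σ.2.2.2 _⟩⟩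
  left_inv σ := by ext; simp
  right_inv σ := by ext; simp

theorem weightE_swap_rev {n : ℕ} (σ : Fin (n + 1) → X) :
    weightE (Function.swap a) n (σ ∘ Fin.rev) = weightE a n σ := by
  rw [weightE, weightE, ← Equiv.prod_comp Fin.revPerm]
  simp [Function.swap, Fin.rev_castSucc, Fin.rev_succ]

theorem nStepE_swap (s t : X) : nStepE Ω (Function.swap a) n s t = nStepE Ω a n t s := by
  rw [nStepE, ← (pathSetRevEquiv n t s).tsum_eq]
  exact tsum_congr fun σ => weightE_swap_rev a σ.1

end Paths

section Green

variable {X : Type*} {Ω : Set X} {a : X → X → ℝ}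

variable (a) in
theorem greenE_swap (s t : X) : greenE Ω (Function.swap a) s t = greenE Ω a t s :=
  tsum_congr fun n => nStepE_swap a n s t

theorem sum_range_succ_nStepE [DecidableEq X] {s : X} (hs : s ∈ Ω) (t : X) (N : ℕ) :
    ∑ n ∈ Finset.range (N + 1), nStepE Ω a n s t = (if s = t then 1 else 0) +
      ∑' u, ENNReal.ofReal (a s u) * ∑ n ∈ Finset.range N, nStepE Ω a n u t := by
  simp_rw [Finset.sum_range_succ', nStepE_zero a hs, nStepE_succ a _ hs, Finset.mul_sum]
  rw [add_comm, Summable.tsum_finsetSum fun _ _ => ENNReal.summable]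

theorem greenE_eq_add_tsum [DecidableEq X] {s : X} (hs : s ∈ Ω) (t : X) :
    greenE Ω a s t =
      (if s = t then 1 else 0) + ∑' u, ENNReal.ofReal (a s u) * greenE Ω a u t := by
  rw [greenE, tsum_eq_zero_add' ENNReal.summable, nStepE_zero a hs]
  simp_rw [nStepE_succ a _ hs, greenE, ← ENNReal.tsum_mul_left]
  rw [ENNReal.tsum_comm]

theorem one_le_greenE_self {s : X} (hs : s ∈ Ω) : 1 ≤ greenE Ω a s s := by
  classical
  rw [greenE_eq_add_tsum hs, if_pos rfl]
  exact le_self_add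

theorem tsum_ofReal_mul_greenE_le {s : X} (hs : s ∈ Ω) (t : X) :
    ∑' u, ENNReal.ofReal (a s u) * greenE Ω a u t ≤ greenE Ω a s t := by
  classical
  rw [greenE_eq_add_tsum hs]
  exact le_add_self

theorem ofReal_mul_greenE_le {s : X} (hs : s ∈ Ω) (u t : X) :
    ENNReal.ofReal (a s u) * greenE Ω a u t ≤ greenE Ω a s t :=
  (ENNReal.le_tsum u).trans (tsum_ofReal_mul_greenE_le hs t)

theorem ofReal_pow_mul_greenE_le {δ : ℝ} {k : ℕ} {u : ℕ → X} (hu : ∀ i < k, u i ∈ Ω)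
    (ha : ∀ i < k, δ ≤ a (u i) (u (i + 1))) (t : X) :
    ENNReal.ofReal δ ^ k * greenE Ω a (u k) t ≤ greenE Ω a (u 0) t := by
  induction k with
  | zero => rw [pow_zero, one_mul]
  | succ k ih =>
    calc ENNReal.ofReal δ ^ (k + 1) * greenE Ω a (u (k + 1)) t
        = ENNReal.ofReal δ ^ k * (ENNReal.ofReal δ * greenE Ω a (u (k + 1)) t) := by
          rw [pow_succ, mul_assoc]
      _ ≤ ENNReal.ofReal δ ^ k * greenE Ω a (u k) t := by
          gcongr
          exact (mul_le_mul_left (ENNReal.ofReal_le_ofReal (ha k k.lt_succ_self)) _).trans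
            (ofReal_mul_greenE_le (hu k k.lt_succ_self) _ t)
      _ ≤ greenE Ω a (u 0) t :=
          ih (fun i hi => hu i (hi.trans k.lt_succ_self)) fun i hi => ha i (hi.trans k.lt_succ_self)

theorem greenE_le_of_supersolution [DecidableEq X] {t : X} {f : X → ℝ≥0∞}
    (hf : ∀ s ∈ Ω, (if s = t then 1 else 0) + ∑' u, ENNReal.ofReal (a s u) * f u ≤ f s)
    (hbdry : ∀ s ∈ Ω, ∀ u ∉ Ω, 0 < a s u → greenE Set.univ a u t ≤ f u) {s : X} (hs : s ∈ Ω) :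
    greenE Set.univ a s t ≤ f s := by
  refine ENNReal.tsum_le_of_sum_range_le fun N => ?_
  induction N generalizing s with
  | zero => exact zero_le
  | succ N ih =>
    rw [sum_range_succ_nStepE (Set.mem_univ s)]
    refine (add_le_add le_rfl (ENNReal.tsum_le_tsum fun u => ?_)).trans (hf s hs)
    rcases le_or_gt (a s u) 0 with ha | ha
    · simp only [ENNReal.ofReal_of_nonpos ha, zero_mul, le_refl]
    · gcongr
      by_cases hu : u ∈ Ω
      · exact ih hu
      · exact (ENNReal.sum_le_tsum _).trans (hbdry s hs u hu ha)

theorem greenE_le_add_tsum_exit {B : Set X} (hB : ∀ s ∈ Ω, ∀ u ∉ Ω, 0 < a s u → u ∈ B)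
    {s : X} (hs : s ∈ Ω) (t : X) :
    greenE Set.univ a s t ≤
      greenE Ω a s t + ∑' v : B, greenE Set.univ a s v * greenE Set.univ a v t := by
  classical
  refine greenE_le_of_supersolution
    (f := fun s => greenE Ω a s t + ∑' v : B, greenE Set.univ a s v * greenE Set.univ a v t)
    (fun s hs => ?_) (fun s hs u hu ha => ?_) hs
  · simp_rw [mul_add, ← ENNReal.tsum_mul_left]
    rw [ENNReal.tsum_add, ← add_assoc, ← greenE_eq_add_tsum hs, ENNReal.tsum_comm]
    gcongr with v
    simp_rw [← mul_assoc]
    rw [ENNReal.tsum_mul_right]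
    gcongr
    exact tsum_ofReal_mul_greenE_le (Set.mem_univ s) v
  · calc greenE Set.univ a u t
        = 1 * greenE Set.univ a u t := (one_mul _).symm
      _ ≤ greenE Set.univ a u u * greenE Set.univ a u t := by
          gcongr
          exact one_le_greenE_self (Set.mem_univ u)
      _ ≤ ∑' v : B, greenE Set.univ a u v * greenE Set.univ a v t :=
          ENNReal.le_tsum (⟨u, hB s hs u hu ha⟩ : B)
      _ ≤ _ := le_add_self

end Green

section Tree

theorem lcpLen_comm (s t : List Bool) : lcpLen s t = lcpLen t s := by
  induction s generalizing t with
  | nil => cases t <;> rfl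
  | cons a s ih =>
    cases t with
    | nil => rfl
    | cons b t => simp only [lcpLen, ih t, eq_comm]

theorem lcpLen_append_append (z r r' : List Bool) :
    lcpLen (z ++ r) (z ++ r') = z.length + lcpLen r r' := by
  induction z with
  | nil => simp only [List.nil_append, List.length_nil, zero_add]
  | cons a z ih =>
    simp only [List.cons_append, lcpLen, if_true, ih, List.length_cons, Nat.add_right_comm]

theorem exists_append_lcpLen (s t : List Bool) :
    ∃ z r r', s = z ++ r ∧ t = z ++ r' ∧ lcpLen s t = z.length := by
  induction s generalizing t with
  | nil => exact ⟨[], [], t, rfl, rfl, by cases t <;> rfl⟩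
  | cons a s ih =>
    rcases t with _ | ⟨b, t⟩
    · exact ⟨[], a :: s, [], rfl, rfl, rfl⟩
    by_cases hab : a = b
    · subst hab
      obtain ⟨z, r, r', rfl, rfl, hz⟩ := ih t
      exact ⟨a :: z, r, r', rfl, rfl, by simp only [lcpLen, if_true, hz, List.length_cons]⟩
    · exact ⟨[], a :: s, b :: t, rfl, rfl, by simp only [lcpLen, if_neg hab, List.length_nil]⟩

theorem treeDist_comm (s t : Word) : treeDist s t = treeDist t s := by
  rw [treeDist, treeDist, lcsLen, lcsLen, lcpLen_comm, Nat.add_comm]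

theorem treeDist_append_append_le (r r' z : Word) :
    treeDist (r ++ z) (r' ++ z) ≤ r.length + r'.length := by
  simp only [treeDist, lcsLen, List.reverse_append, lcpLen_append_append, List.length_append,
    List.length_reverse]
  omega

theorem exists_append_treeDist (s t : Word) :
    ∃ r r' z, s = r ++ z ∧ t = r' ++ z ∧ treeDist s t = r.length + r'.length := by
  obtain ⟨z, r, r', hs, ht, hz⟩ := exists_append_lcpLen s.reverse t.reverse
  rw [List.reverse_eq_iff, List.reverse_append] at hs ht
  refine ⟨r.reverse, r'.reverse, z.reverse, hs, ht, ?_⟩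
  rw [treeDist, lcsLen, hz, hs, ht]
  simp only [List.length_append, List.length_reverse, Nat.add_sub_cancel]

theorem treeDist_cons_self (a : Bool) (s : Word) : treeDist (a :: s) s = 1 := by
  have h := lcpLen_append_append s.reverse [a] []
  rw [List.append_nil] at h
  simp only [treeDist, lcsLen, List.reverse_cons, h, List.length_cons, List.length_reverse, lcpLen]
  omega

/-- Geodesics leaving the branch `Δ_x` pass through `x`. -/
theorem treeDist_le_of_mem_Delta_of_notMem {x s v : Word} (hs : s ∈ Delta x) (hv : v ∉ Delta x) :
    treeDist x v ≤ treeDist s v := by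
  obtain ⟨r, r', z, rfl, rfl, hd⟩ := exists_append_treeDist s v
  have hzx : z <:+ x := (List.suffix_or_suffix_of_suffix hs (List.suffix_append r z)).resolve_left
    fun hxz => hv (hxz.trans (List.suffix_append r' z))
  obtain ⟨y, rfl⟩ := hzx
  have hyr : y.length ≤ r.length := by
    have := hs.length_le
    rwa [List.length_append, List.length_append, Nat.add_le_add_iff_right] at this
  rw [hd]
  exact (treeDist_append_append_le y r' z).trans (Nat.add_le_add_right hyr _)

theorem H1.treeDist_le_of_exit {p : Word → Word → ℝ} {S : ℕ} (h : H1 p S) {x s v : Word}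
    (hs : s ∈ Delta x) (hv : v ∉ Delta x) (hsv : 0 < p s v) : treeDist x v ≤ S :=
  (treeDist_le_of_mem_Delta_of_notMem hs hv).trans <| not_lt.1 fun hS => hsv.ne' (h s v hS)

theorem exists_encard_ball_le (S : ℕ) :
    ∃ N : ℕ, 0 < N ∧ ∀ x, {v | treeDist x v ≤ S}.encard ≤ N := by
  have hfin : ({w : Word | w.length ≤ S} ×ˢ Set.Iic S).Finite :=
    (List.finite_length_le Bool S).prod (Set.finite_Iic S)
  refine ⟨({w : Word | w.length ≤ S} ×ˢ Set.Iic S).ncard,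
    (Set.ncard_pos hfin).2 ⟨([], 0), Nat.zero_le S, Nat.zero_le S⟩, fun x => ?_⟩
  rw [hfin.cast_ncard_eq]
  refine (Set.encard_le_encard ?_).trans (Set.encard_image_le (fun q => q.1 ++ x.drop q.2) _)
  intro v (hv : treeDist x v ≤ S)
  obtain ⟨r, r', z, rfl, rfl, hd⟩ := exists_append_treeDist x v
  refine ⟨(r', r.length), ⟨?_, ?_⟩, congrArg (r' ++ ·) List.drop_left⟩
  · exact (Nat.le_add_left _ _).trans (hd ▸ hv)
  · exact (Nat.le_add_right _ _).trans (hd ▸ hv)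

theorem pow_treeDist_mul_le {c : ℝ≥0∞} {f : Word → ℝ≥0∞}
    (hf : ∀ s t, treeDist s t = 1 → c * f t ≤ f s) (s t : Word) :
    c ^ treeDist s t * f t ≤ f s := by
  have up (w z : Word) : c ^ w.length * f z ≤ f (w ++ z) := by
    induction w with
    | nil => rw [List.length_nil, pow_zero, one_mul, List.nil_append]
    | cons a w ih =>
      rw [List.length_cons, pow_succ', mul_assoc]
      exact (mul_le_mul_right ih c).trans (hf _ _ (treeDist_cons_self a _))
  have down (w z : Word) : c ^ w.length * f (w ++ z) ≤ f z := by
    induction w with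
    | nil => rw [List.length_nil, pow_zero, one_mul, List.nil_append]
    | cons a w ih =>
      rw [List.length_cons, pow_succ, mul_assoc]
      exact (mul_le_mul_right (hf _ _ (treeDist_comm _ _ ▸ treeDist_cons_self a _)) _).trans ih
  obtain ⟨r, r', z, rfl, rfl, hd⟩ := exists_append_treeDist s t
  rw [hd, pow_add, mul_assoc]
  exact (mul_le_mul_right (down r' z) _).trans (up r z)

end Tree

section Harnack

/-- Uniform irreducibility of a kernel on the tree: any two neighbours are joined by at most `K`
steps of weight at least `δ`. This is (H3) without the uniformity over right translates. -/
def UniformlyIrreducible (p : Word → Word → ℝ) (δ : ℝ) (K : ℕ) : Prop :=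
  ∀ s t, treeDist s t = 1 → ∃ k ≤ K, ∃ u : ℕ → Word, u 0 = s ∧ u k = t ∧
    ∀ i < k, δ ≤ p (u i) (u (i + 1))

variable {p : Word → Word → ℝ} {δ : ℝ} {K S : ℕ}

theorem H3.uniformlyIrreducible (h : H3 p δ K) : UniformlyIrreducible p δ K := by
  intro s t hst
  obtain ⟨k, hk, u, hu₀, huk, hu⟩ := h s t hst
  exact ⟨k, hk, u, hu₀, huk, fun i hi => by simpa only [List.append_nil] using hu i hi []⟩

namespace UniformlyIrreducible

theorem mono (h : UniformlyIrreducible p δ K) {δ' : ℝ} (hδ : δ' ≤ δ) :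
    UniformlyIrreducible p δ' K := by
  intro s t hst
  obtain ⟨k, hk, u, hu₀, huk, hu⟩ := h s t hst
  exact ⟨k, hk, u, hu₀, huk, fun i hi => hδ.trans (hu i hi)⟩

theorem swap (h : UniformlyIrreducible p δ K) :
    UniformlyIrreducible (Function.swap p) δ K := by
  intro s t hst
  obtain ⟨k, hk, u, hu₀, huk, hu⟩ := h t s (treeDist_comm s t ▸ hst)
  refine ⟨k, hk, fun i => u (k - i), huk, (congrArg u (Nat.sub_self k)).trans hu₀, fun i hi => ?_⟩
  have hstep := hu (k - (i + 1)) (by omega)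
  rwa [show k - (i + 1) + 1 = k - i by omega] at hstep

theorem pow_treeDist_mul_greenE_le (h : UniformlyIrreducible p δ K) (hδ : δ ≤ 1) (s t r : Word) :
    (ENNReal.ofReal δ ^ K) ^ treeDist s t * greenE Set.univ p t r ≤ greenE Set.univ p s r := by
  refine pow_treeDist_mul_le (f := fun s => greenE Set.univ p s r) (fun s t hst => ?_) s t
  obtain ⟨k, hk, u, rfl, rfl, hu⟩ := h s t hst
  calc ENNReal.ofReal δ ^ K * greenE Set.univ p (u k) r
      ≤ ENNReal.ofReal δ ^ k * greenE Set.univ p (u k) r := by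
        gcongr ?_ * _
        exact pow_le_pow_right_of_le_one' (ENNReal.ofReal_le_one.2 hδ) hk
    _ ≤ greenE Set.univ p (u 0) r :=
        ofReal_pow_mul_greenE_le (fun i _ => Set.mem_univ (u i)) hu r

theorem greenE_le_of_treeDist_le (h : UniformlyIrreducible p δ K) (hδ₀ : 0 < δ) (hδ₁ : δ ≤ 1)
    {x v : Word} (hxv : treeDist x v ≤ S) (t : Word) :
    greenE Set.univ p v t ≤ ENNReal.ofReal (δ ^ (K * S))⁻¹ * greenE Set.univ p x t := by
  have hc : ENNReal.ofReal δ ^ (K * S) * greenE Set.univ p v t ≤ greenE Set.univ p x t := by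
    refine le_trans ?_ (h.pow_treeDist_mul_greenE_le hδ₁ x v t)
    rw [pow_mul]
    gcongr ?_ * _
    exact pow_le_pow_right_of_le_one' (pow_le_one' (ENNReal.ofReal_le_one.2 hδ₁) K) hxv
  rw [ENNReal.ofReal_inv_of_pos (by positivity), ENNReal.ofReal_pow (by positivity),
    ← ENNReal.mul_le_iff_le_inv]
  · exact hc
  · exact pow_ne_zero _ (ENNReal.ofReal_pos.2 hδ₀).ne'
  · exact ENNReal.pow_ne_top ENNReal.ofReal_ne_top

theorem greenE_mul_greenE_le_of_treeDist_le (h : UniformlyIrreducible p δ K) (hδ₀ : 0 < δ)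
    (hδ₁ : δ ≤ 1) {x v : Word} (hxv : treeDist x v ≤ S) (s t : Word) :
    greenE Set.univ p s v * greenE Set.univ p v t ≤
      ENNReal.ofReal ((δ ^ (K * S))⁻¹ ^ 2) * greenE Set.univ p s x * greenE Set.univ p x t := by
  have hswap := h.swap.greenE_le_of_treeDist_le hδ₀ hδ₁ hxv s
  rw [greenE_swap p, greenE_swap p] at hswap
  refine (mul_le_mul' hswap (h.greenE_le_of_treeDist_le hδ₀ hδ₁ hxv t)).trans_eq ?_
  rw [ENNReal.ofReal_pow (by positivity)]
  ring

end UniformlyIrreducible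

end Harnack

theorem green_branch_estimate_general (S : ℕ) {δ₀ : ℝ} (hδ₀ : 0 < δ₀) (K : ℕ) :
    ∃ C > (0 : ℝ), ∀ p : Word → Word → ℝ, (∀ s t, 0 ≤ p s t) →
      H1 p S → UniformlyIrreducible p δ₀ K →
      ∀ x : Word, ∀ s ∈ Delta x, ∀ t,
        greenE Set.univ p s t ≤
          greenE (Delta x) p s t +
            ENNReal.ofReal C * greenE Set.univ p s x * greenE Set.univ p x t := by
  obtain ⟨N, hN₀, hN⟩ := exists_encard_ball_le S
  have hδ : 0 < min δ₀ 1 := lt_min hδ₀ one_pos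
  have hN_pos : (0 : ℝ) < N := Nat.cast_pos.2 hN₀
  refine ⟨N * (min δ₀ 1 ^ (K * S))⁻¹ ^ 2, by positivity, fun p _ hrange hirr x s hs t => ?_⟩
  have hharnack (v : {v | treeDist x v ≤ S}) :=
    (hirr.mono (min_le_left δ₀ 1)).greenE_mul_greenE_le_of_treeDist_le hδ (min_le_right δ₀ 1)
      v.2 s t
  refine (greenE_le_add_tsum_exit (fun _ hs _ => hrange.treeDist_le_of_exit hs) hs t).trans ?_
  gcongr
  refine (ENNReal.tsum_le_tsum hharnack).trans ?_
  rw [ENNReal.tsum_set_const, ENNReal.ofReal_mul hN_pos.le, ENNReal.ofReal_natCast, mul_assoc,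
    mul_assoc, mul_assoc]
  gcongr
  exact_mod_cast hN x

/-- Estimate from the proof of Proposition 3.5: there is a constant `C` depending only on
`S`, `δ₀` and `K` such that `G_p(s,t) ≤ G_{p,Δ_x}(s,t) + C G_p(s,x) G_p(x,t)` in `[0,∞]`
for all `s,t ∈ Δ_x`. -/
theorem green_branch_estimate (S : ℕ) (δ₀ : ℝ) (hδ₀ : δ₀ ∈ Set.Ioo (0 : ℝ) 1) (K : ℕ) :
    ∃ C > (0 : ℝ), ∀ p : Word → Word → ℝ, (∀ s t, 0 ≤ p s t) →
      H1 p S → H2 p δ₀ → H3 p δ₀ K →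
      ∀ x : Word, ∀ s ∈ Delta x, ∀ t ∈ Delta x,
        greenE Set.univ p s t ≤
          greenE (Delta x) p s t +
            ENNReal.ofReal C * greenE Set.univ p s x * greenE Set.univ p x t := by
  obtain ⟨C, hC, h⟩ := green_branch_estimate_general S hδ₀.1 K
  exact ⟨C, hC, fun p hp h1 _ h3 x s hs t _ => h p hp h1 h3.uniformlyIrreducible x s hs t⟩

end Paper
end

section
/- Fix q ∈ (0,1). There exists a constant c > 0, depending only on q, such that for all natural numbers a, b, v: qbinom(a+b+v+1, v) ≥ c²·[v+1]_q·qbinom(a+v, v)·qbinom(b+v, v). (The q-binomial estimate underlying Lemma 2.2 of the paper.) -/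
open scoped ENNReal

namespace Paper

/-!
For `0 < q < 1` and `k ≤ n`, the coefficient `qbinom q n k` is at least `q ^ (-k (n - k))`, because
each factor of the product is at least `1`, and at most a constant multiple of it, because the
denominators stay above the infinite product `∏ (1 - q ^ (2 i))`, `i ≥ 1`, which converges to a
positive number. Since `[v + 1]_q = qbinom q (v + 1) 1`, the estimate reduces to the identity
`v + v a + v b = v (a + b + 1)` between exponents.
-/

theorem exists_pos_le_prod_one_sub_of_summable {ι : Type*} {f : ι → ℝ} (hf_nonneg : ∀ i, 0 ≤ f i)
    (hf_lt : ∀ i, f i < 1) (hf : Summable f) :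
    ∃ δ > 0, ∀ s : Finset ι, δ ≤ ∏ i ∈ s, (1 - f i) := by
  have hlog_summable : Summable fun i => -Real.log (1 - f i) := by
    simpa only [sub_eq_add_neg] using (Real.summable_log_one_add_of_summable hf.neg).neg
  have hlog_nonneg (i : ι) : 0 ≤ -Real.log (1 - f i) :=
    neg_nonneg.2 <| Real.log_nonpos (sub_nonneg.2 (hf_lt i).le) (sub_le_self 1 (hf_nonneg i))
  refine ⟨Real.exp (-∑' i, -Real.log (1 - f i)), Real.exp_pos _, fun s => ?_⟩
  calc Real.exp (-∑' i, -Real.log (1 - f i))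
      ≤ Real.exp (-∑ i ∈ s, -Real.log (1 - f i)) := by
        gcongr
        exact hlog_summable.sum_le_tsum s fun i _ => hlog_nonneg i
    _ = ∏ i ∈ s, (1 - f i) := by
        rw [Finset.sum_neg_distrib, neg_neg, Real.exp_sum]
        exact Finset.prod_congr rfl fun i _ => Real.exp_log (sub_pos.2 (hf_lt i))

theorem exists_pos_le_prod_one_sub_pow {r : ℝ} (hr₀ : 0 ≤ r) (hr₁ : r < 1) :
    ∃ δ > 0, ∀ k : ℕ, δ ≤ ∏ i ∈ Finset.range k, (1 - r ^ (i + 1)) := by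
  obtain ⟨δ, hδ, hle⟩ := exists_pos_le_prod_one_sub_of_summable
    (fun i : ℕ => pow_nonneg hr₀ (i + 1)) (fun i => pow_lt_one₀ hr₀ hr₁ i.succ_ne_zero)
    ((summable_nat_add_iff 1).2 (summable_geometric_of_lt_one hr₀ hr₁))
  exact ⟨δ, hδ, fun k => hle (Finset.range k)⟩

theorem prod_range_one_sub_pow_two_mul_sub {R : Type*} [CommRing R] (q : R) (k : ℕ) :
    ∏ i ∈ Finset.range k, (1 - q ^ (2 * (k - i))) =
      ∏ i ∈ Finset.range k, (1 - (q ^ 2) ^ (i + 1)) := by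
  rw [← Finset.prod_range_reflect]
  refine Finset.prod_congr rfl fun i hi => ?_
  have hik : k - (k - 1 - i) = i + 1 := by
    have := Finset.mem_range.1 hi
    omega
  rw [hik, pow_mul]

theorem qInt_succ_eq_qbinom {q : ℝ} (hq : q ≠ 0) (n : ℕ) :
    qInt q (n + 1) = qbinom q (n + 1) 1 := by
  have hden : q⁻¹ - q = (1 - q ^ 2) / q := by field_simp
  have hnum : q ^ (-((n + 1 : ℕ) : ℤ)) - q ^ ((n + 1 : ℕ) : ℤ) =
      q ^ (-(n : ℤ)) * (1 - q ^ (2 * (n + 1))) / q := by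
    simp only [zpow_neg, zpow_natCast]
    field_simp
    ring
  rw [qInt, hnum, hden, div_div_div_cancel_right₀ hq]
  simp [qbinom, mul_div_assoc]

theorem qbinom_nonneg {q : ℝ} (hq₀ : 0 ≤ q) (hq₁ : q ≤ 1) (n k : ℕ) : 0 ≤ qbinom q n k :=
  mul_nonneg (zpow_nonneg hq₀ _) <| Finset.prod_nonneg fun _ _ =>
    div_nonneg (sub_nonneg.2 (pow_le_one₀ hq₀ hq₁)) (sub_nonneg.2 (pow_le_one₀ hq₀ hq₁))

theorem zpow_le_qbinom {q : ℝ} (hq₀ : 0 ≤ q) (hq₁ : q < 1) {n k : ℕ} (hkn : k ≤ n) :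
    q ^ (-((k * (n - k) : ℕ) : ℤ)) ≤ qbinom q n k := by
  have one_le_factor (i : ℕ) (hi : i ∈ Finset.range k) :
      1 ≤ (1 - q ^ (2 * (n - i))) / (1 - q ^ (2 * (k - i))) := by
    have hik := Finset.mem_range.1 hi
    have hden : 0 < 1 - q ^ (2 * (k - i)) := sub_pos.2 (pow_lt_one₀ hq₀ hq₁ (by omega))
    rw [one_le_div hden]
    exact sub_le_sub_left (pow_le_pow_of_le_one hq₀ hq₁.le (by omega)) 1
  exact le_mul_of_one_le_right (zpow_nonneg hq₀ _) (Finset.one_le_prod one_le_factor)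

theorem exists_pos_mul_qbinom_le_zpow {q : ℝ} (hq₀ : 0 ≤ q) (hq₁ : q < 1) :
    ∃ δ > 0, ∀ n k : ℕ, δ * qbinom q n k ≤ q ^ (-((k * (n - k) : ℕ) : ℤ)) := by
  obtain ⟨δ, hδ, hden⟩ :=
    exists_pos_le_prod_one_sub_pow (sq_nonneg q) (pow_lt_one₀ hq₀ hq₁ two_ne_zero)
  refine ⟨δ, hδ, fun n k => ?_⟩
  have hnum : ∏ i ∈ Finset.range k, (1 - q ^ (2 * (n - i))) ≤ 1 :=
    Finset.prod_le_one (fun _ _ => sub_nonneg.2 (pow_le_one₀ hq₀ hq₁.le))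
      fun _ _ => sub_le_self 1 (pow_nonneg hq₀ _)
  rw [qbinom, Finset.prod_div_distrib, prod_range_one_sub_pow_two_mul_sub, mul_left_comm]
  refine mul_le_of_le_one_right (zpow_nonneg hq₀ _) ?_
  rw [← mul_div_assoc]
  refine div_le_one_of_le₀ ?_ (hδ.le.trans (hden k))
  exact (mul_le_of_le_one_right hδ.le hnum).trans (hden k)

/-- The `q`-binomial estimate underlying Lemma 2.2: there is `c > 0`, depending only on
`q`, with `qbinom(a+b+v+1, v) ≥ c² [v+1]_q qbinom(a+v, v) qbinom(b+v, v)`. -/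
theorem qbinom_estimate (q : ℝ) (hq : q ∈ Set.Ioo (0 : ℝ) 1) :
    ∃ c > (0 : ℝ), ∀ a b v : ℕ,
      c ^ 2 * qInt q (v + 1) * qbinom q (a + v) v * qbinom q (b + v) v ≤
        qbinom q (a + b + v + 1) v := by
  obtain ⟨hq₀, hq₁⟩ := hq
  obtain ⟨δ, hδ, hle⟩ := exists_pos_mul_qbinom_le_zpow hq₀.le hq₁
  have hnonneg (n k : ℕ) : 0 ≤ δ * qbinom q n k :=
    mul_nonneg hδ.le (qbinom_nonneg hq₀.le hq₁.le n k)
  refine ⟨√(δ ^ 3), Real.sqrt_pos.2 (pow_pos hδ 3), fun a b v => ?_⟩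
  have hsub : a + b + v + 1 - v = a + b + 1 := by omega
  calc √(δ ^ 3) ^ 2 * qInt q (v + 1) * qbinom q (a + v) v * qbinom q (b + v) v
      = δ * qbinom q (v + 1) 1 * (δ * qbinom q (a + v) v) * (δ * qbinom q (b + v) v) := by
        rw [Real.sq_sqrt (pow_nonneg hδ.le 3), qInt_succ_eq_qbinom hq₀.ne']
        ring
    _ ≤ q ^ (-((1 * (v + 1 - 1) : ℕ) : ℤ)) * q ^ (-((v * (a + v - v) : ℕ) : ℤ)) *
          q ^ (-((v * (b + v - v) : ℕ) : ℤ)) := by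
        gcongr
        exacts [hnonneg _ _, hnonneg _ _, hle _ _, hle _ _, hle _ _]
    _ = q ^ (-((v * (a + b + v + 1 - v) : ℕ) : ℤ)) := by
        simp only [hsub, Nat.add_sub_cancel, ← zpow_add₀ hq₀.ne']
        congr 1
        push_cast
        ring
    _ ≤ qbinom q (a + b + v + 1) v := zpow_le_qbinom hq₀.le hq₁ (by omega)

end Paper
end
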